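/- If a representation z_t preserves autoinformation at lag τ for a homogeneous Markov chain, then for any τ' ≥ τ the predictive distributions for any future target agree: p(y_{t+τ'} | z_t) yields the same mutual information I(z_t; y_{t+τ'}) = I(x_t; y_{t+τ'}) for every noisy function y_{t+τ'} = f(x_{t+τ'}, ε). -/

import Mathlib

/-!
Conditional independence obeys a calculus (symmetry, mapping, composition of Markov chains), and
for a Markov chain `Z - X - Y` the data processing inequality `I(Z; Y) ≤ I(X; Y)` is an equality
exactly when `X - Z - Y` is a Markov chain as well.

Data processing gives `I(z_t; z_{t+τ}) ≤ I(z_t; x_{t+τ}) ≤ I(x_t; x_{t+τ})`, so all terms of the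
average gap are nonnegative and hence zero. Equality in the second inequality yields the chain
`x_t - z_t - x_{t+τ}`. Prolonging it by `x_{t+τ} - x_{t+τ'} - y_{t+τ'}` gives
`x_t - z_t - y_{t+τ'}`, which is equality in data processing for the target.
-/

open Finset

/-- Probability mass function of a random variable `X : Ω → α` under the weight `μ`. -/
def pmfOf {Ω α : Type} [Fintype Ω] [DecidableEq α] (μ : Ω → ℝ) (X : Ω → α) (a : α) : ℝ :=
  ∑ ω ∈ Finset.univ.filter (fun ω => X ω = a), μ ω

/-- `μ` is a probability mass function on the finite sample space `Ω`. -/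
def IsPMF {Ω : Type} [Fintype Ω] (μ : Ω → ℝ) : Prop :=
  (∀ ω, 0 ≤ μ ω) ∧ ∑ ω, μ ω = 1

/-- Mutual information `I(X; Y)` of two finite-valued random variables. -/
noncomputable def mi {Ω α β : Type} [Fintype Ω] [Fintype α] [DecidableEq α]
    [Fintype β] [DecidableEq β] (μ : Ω → ℝ) (X : Ω → α) (Y : Ω → β) : ℝ :=
  ∑ a : α, ∑ b : β,
    pmfOf μ (fun ω => (X ω, Y ω)) (a, b) *
      Real.log (pmfOf μ (fun ω => (X ω, Y ω)) (a, b) / (pmfOf μ X a * pmfOf μ Y b))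

/-- Conditional mutual information `I(X; Y | Z)` of finite-valued random variables. -/
noncomputable def cmi {Ω α β γ : Type} [Fintype Ω] [Fintype α] [DecidableEq α]
    [Fintype β] [DecidableEq β] [Fintype γ] [DecidableEq γ]
    (μ : Ω → ℝ) (X : Ω → α) (Y : Ω → β) (Z : Ω → γ) : ℝ :=
  ∑ a : α, ∑ b : β, ∑ c : γ,
    pmfOf μ (fun ω => (X ω, Y ω, Z ω)) (a, b, c) *
      Real.log (pmfOf μ (fun ω => (X ω, Y ω, Z ω)) (a, b, c) * pmfOf μ Z c /
        (pmfOf μ (fun ω => (X ω, Z ω)) (a, c) * pmfOf μ (fun ω => (Y ω, Z ω)) (b, c)))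

/-- Conditional pmf `P(X = a | Y = b)`. -/
noncomputable def condPMF {Ω α β : Type} [Fintype Ω] [DecidableEq α] [DecidableEq β]
    (μ : Ω → ℝ) (X : Ω → α) (Y : Ω → β) (a : α) (b : β) : ℝ :=
  pmfOf μ (fun ω => (X ω, Y ω)) (a, b) / pmfOf μ Y b

/-- Independence of two finite-valued random variables. -/
def IndepRV {Ω α β : Type} [Fintype Ω] [Fintype α] [DecidableEq α]
    [Fintype β] [DecidableEq β] (μ : Ω → ℝ) (X : Ω → α) (Y : Ω → β) : Prop :=
  ∀ a b, pmfOf μ (fun ω => (X ω, Y ω)) (a, b) = pmfOf μ X a * pmfOf μ Y b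

section Pmf

variable {Ω α β γ : Type} [Fintype Ω] [DecidableEq α] [DecidableEq β] [DecidableEq γ]
  {μ : Ω → ℝ} {X : Ω → α} {Y : Ω → β} {Z : Ω → γ}

lemma pmfOf_congr {a : α} {b : β} (h : ∀ ω, X ω = a ↔ Y ω = b) : pmfOf μ X a = pmfOf μ Y b := by
  simp only [pmfOf, h]

lemma pmfOf_nonneg (hμ : ∀ ω, 0 ≤ μ ω) (X : Ω → α) (a : α) : 0 ≤ pmfOf μ X a :=
  Finset.sum_nonneg fun ω _ => hμ ω

lemma pmfOf_apply_pos (hμ : ∀ ω, 0 ≤ μ ω) (X : Ω → α) {ω : Ω} (hω : μ ω ≠ 0) :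
    0 < pmfOf μ X (X ω) :=
  Finset.sum_pos' (fun ω' _ => hμ ω') ⟨ω, by simp, (hμ ω).lt_of_ne' hω⟩

lemma pmfOf_eq_zero_of_imp (hμ : ∀ ω, 0 ≤ μ ω) {a : α} {b : β} (h : ∀ ω, X ω = a → Y ω = b)
    (hb : pmfOf μ Y b = 0) : pmfOf μ X a = 0 := by
  refine le_antisymm (hb ▸ ?_) (pmfOf_nonneg hμ X a)
  exact Finset.sum_le_sum_of_subset_of_nonneg
    (Finset.monotone_filter_right _ fun ω _ => h ω) fun ω _ _ => hμ ω

lemma pmfOf_prodMk_eq_zero (hμ : ∀ ω, 0 ≤ μ ω) {b : β} (hb : pmfOf μ Y b = 0) (a : α) :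
    pmfOf μ (fun ω => (X ω, Y ω)) (a, b) = 0 :=
  pmfOf_eq_zero_of_imp hμ (fun _ h => (Prod.mk.inj h).2) hb

lemma pmfOf_eq_zero_of_mul_div_eq_zero (hμ : ∀ ω, 0 ≤ μ ω) {a : α} {b : β} {c : γ}
    (h : pmfOf μ (fun ω => (X ω, Z ω)) (a, c) * pmfOf μ (fun ω => (Y ω, Z ω)) (b, c) /
      pmfOf μ Z c = 0) :
    pmfOf μ (fun ω => (X ω, Y ω, Z ω)) (a, b, c) = 0 := by
  rcases div_eq_zero_iff.1 h with h | hZ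
  · rcases mul_eq_zero.1 h with hXZ | hYZ
    · exact pmfOf_eq_zero_of_imp hμ (by grind) hXZ
    · exact pmfOf_eq_zero_of_imp hμ (by grind) hYZ
  · exact pmfOf_eq_zero_of_imp hμ (by grind) hZ

lemma pmfOf_prodMk_swap (a : α) (b : β) :
    pmfOf μ (fun ω => (X ω, Y ω)) (a, b) = pmfOf μ (fun ω => (Y ω, X ω)) (b, a) :=
  pmfOf_congr fun ω => by grind

lemma pmfOf_eq_sum {ι : Type} (s : Finset ι) (I : Ω → ι) {a : α} {b : ι → β}
    (hs : ∀ ω, X ω = a → I ω ∈ s) (h : ∀ i ∈ s, ∀ ω, Y ω = b i ↔ X ω = a ∧ I ω = i) :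
    pmfOf μ X a = ∑ i ∈ s, pmfOf μ Y (b i) := by
  classical
  rw [pmfOf, ← Finset.sum_fiberwise_of_maps_to (t := s) (g := I) (by simpa using hs)]
  refine Finset.sum_congr rfl fun i hi => ?_
  simp only [pmfOf, Finset.filter_filter, h i hi]

lemma sum_pmfOf_fst {s : Finset α} (hs : ∀ ω, X ω ∈ s) (b : β) :
    ∑ a ∈ s, pmfOf μ (fun ω => (X ω, Y ω)) (a, b) = pmfOf μ Y b :=
  (pmfOf_eq_sum s X (fun ω _ => hs ω) fun a _ ω => by grind).symm

lemma sum_pmfOf_middle {s : Finset β} (hs : ∀ ω, Y ω ∈ s) (a : α) (c : γ) :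
    ∑ b ∈ s, pmfOf μ (fun ω => (X ω, Y ω, Z ω)) (a, b, c) =
      pmfOf μ (fun ω => (X ω, Z ω)) (a, c) :=
  (pmfOf_eq_sum s Y (fun ω _ => hs ω) fun b _ ω => by grind).symm

lemma sum_pmfOf_mul [Fintype α] (X : Ω → α) (F : α → ℝ) :
    ∑ a, pmfOf μ X a * F a = ∑ ω, μ ω * F (X ω) := by
  simp only [pmfOf, Finset.sum_mul, Finset.sum_filter, ite_mul, zero_mul]
  rw [Finset.sum_comm]
  simp only [Finset.sum_ite_eq, Finset.mem_univ, if_true]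

end Pmf

section CondIndep

variable {Ω α β γ δ : Type} [Fintype Ω] [DecidableEq α] [DecidableEq β] [DecidableEq γ]
  [DecidableEq δ] {μ : Ω → ℝ} {X : Ω → α} {Y : Ω → β} {Z : Ω → γ}

/-- Conditional independence of `X` and `Y` given `Z`, i.e. the Markov chain `X - Z - Y`, in a
division-free form. Unconditional independence is the case of a constant `Z`. -/
def CondIndepRV (μ : Ω → ℝ) (X : Ω → α) (Y : Ω → β) (Z : Ω → γ) : Prop :=
  ∀ a b c, pmfOf μ (fun ω => (X ω, Y ω, Z ω)) (a, b, c) * pmfOf μ Z c =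
    pmfOf μ (fun ω => (X ω, Z ω)) (a, c) * pmfOf μ (fun ω => (Y ω, Z ω)) (b, c)

lemma condIndepRV_iff_eq_div (hμ : ∀ ω, 0 ≤ μ ω) :
    CondIndepRV μ X Y Z ↔ ∀ a b c, pmfOf μ (fun ω => (X ω, Y ω, Z ω)) (a, b, c) =
      pmfOf μ (fun ω => (X ω, Z ω)) (a, c) * pmfOf μ (fun ω => (Y ω, Z ω)) (b, c) /
        pmfOf μ Z c := by
  refine forall₃_congr fun a b c => ?_
  by_cases hc : pmfOf μ Z c = 0
  · have hYZ : pmfOf μ (fun ω => (Y ω, Z ω)) (b, c) = 0 := pmfOf_prodMk_eq_zero hμ hc b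
    simp [hYZ, pmfOf_prodMk_eq_zero hμ hYZ a]
  · rw [eq_div_iff hc]

lemma condIndepRV_of_eq_mul {F : α → γ → ℝ} {G : β → γ → ℝ}
    (h : ∀ a b c, pmfOf μ (fun ω => (X ω, Y ω, Z ω)) (a, b, c) = F a c * G b c) :
    CondIndepRV μ X Y Z := by
  intro a b c
  have hX (ω : Ω) : X ω ∈ univ.image X := Finset.mem_image_of_mem X (Finset.mem_univ ω)
  have hY (ω : Ω) : Y ω ∈ univ.image Y := Finset.mem_image_of_mem Y (Finset.mem_univ ω)
  have hXZ (a : α) : pmfOf μ (fun ω => (X ω, Z ω)) (a, c) = F a c * ∑ b ∈ univ.image Y, G b c := by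
    rw [← sum_pmfOf_middle hY, Finset.mul_sum]
    exact Finset.sum_congr rfl fun b _ => h a b c
  have hYZ : pmfOf μ (fun ω => (Y ω, Z ω)) (b, c) = (∑ a ∈ univ.image X, F a c) * G b c := by
    rw [← sum_pmfOf_fst hX, Finset.sum_mul]
    exact Finset.sum_congr rfl fun a _ => h a b c
  have hZ : pmfOf μ Z c = (∑ a ∈ univ.image X, F a c) * ∑ b ∈ univ.image Y, G b c := by
    rw [← sum_pmfOf_fst hX, Finset.sum_mul]
    exact Finset.sum_congr rfl fun a _ => hXZ a
  rw [h, hXZ, hYZ, hZ]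
  ring

lemma condIndepRV_const_of_eq_mul {F : α → ℝ} {G : β → ℝ}
    (h : ∀ a b, pmfOf μ (fun ω => (X ω, Y ω)) (a, b) = F a * G b) :
    CondIndepRV μ X Y fun _ => () :=
  condIndepRV_of_eq_mul (F := fun a _ => F a) (G := fun b _ => G b) fun a b _ => by
    rw [← h]
    exact pmfOf_congr fun ω => by grind

lemma condIndepRV_self_right (X : Ω → α) (Z : Ω → γ) : CondIndepRV μ X Z Z := by
  refine condIndepRV_of_eq_mul (F := fun a c => pmfOf μ (fun ω => (X ω, Z ω)) (a, c))
    (G := fun b c => if b = c then 1 else 0) fun a b c => ?_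
  split_ifs with hbc
  · rw [mul_one]
    exact pmfOf_congr fun ω => by grind
  · rw [mul_zero]
    exact Finset.sum_eq_zero fun ω hω => by grind

namespace CondIndepRV

lemma symm (h : CondIndepRV μ X Y Z) : CondIndepRV μ Y X Z := by
  intro b a c
  rw [mul_comm (pmfOf μ (fun ω => (Y ω, Z ω)) (b, c)), ← h a b c]
  exact congrArg (· * _) (pmfOf_congr fun ω => by grind)

lemma map_left (h : CondIndepRV μ X Y Z) (f : α → γ → δ) :
    CondIndepRV μ (fun ω => f (X ω) (Z ω)) Y Z := by
  intro d b c
  let s : Finset α := {a ∈ univ.image X | f a c = d}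
  have hXYZ : pmfOf μ (fun ω => (f (X ω) (Z ω), Y ω, Z ω)) (d, b, c) =
      ∑ a ∈ s, pmfOf μ (fun ω => (X ω, Y ω, Z ω)) (a, b, c) :=
    pmfOf_eq_sum s X (by grind) (by grind)
  have hXZ : pmfOf μ (fun ω => (f (X ω) (Z ω), Z ω)) (d, c) =
      ∑ a ∈ s, pmfOf μ (fun ω => (X ω, Z ω)) (a, c) :=
    pmfOf_eq_sum s X (by grind) (by grind)
  rw [hXYZ, hXZ, Finset.sum_mul, Finset.sum_mul]
  exact Finset.sum_congr rfl fun a _ => h a b c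

lemma map_right (h : CondIndepRV μ X Y Z) (f : β → γ → δ) :
    CondIndepRV μ X (fun ω => f (Y ω) (Z ω)) Z :=
  (h.symm.map_left f).symm

lemma trans (hμ : ∀ ω, 0 ≤ μ ω) {W : Ω → δ} (hW : CondIndepRV μ X W Z)
    (hY : CondIndepRV μ (fun ω => (X ω, Z ω)) Y W) : CondIndepRV μ X Y Z := by
  rw [condIndepRV_iff_eq_div hμ] at hW hY
  refine condIndepRV_of_eq_mul (F := fun a c => pmfOf μ (fun ω => (X ω, Z ω)) (a, c))
    (G := fun b c => ∑ w ∈ univ.image W, pmfOf μ (fun ω => (W ω, Z ω)) (w, c) / pmfOf μ Z c *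
      (pmfOf μ (fun ω => (Y ω, W ω)) (b, w) / pmfOf μ W w)) fun a b c => ?_
  have hsum : pmfOf μ (fun ω => (X ω, Y ω, Z ω)) (a, b, c) =
      ∑ w ∈ univ.image W, pmfOf μ (fun ω => ((X ω, Z ω), Y ω, W ω)) ((a, c), b, w) :=
    pmfOf_eq_sum _ W (by grind) (by grind)
  have hXZW (w : δ) : pmfOf μ (fun ω => ((X ω, Z ω), W ω)) ((a, c), w) =
      pmfOf μ (fun ω => (X ω, W ω, Z ω)) (a, w, c) :=
    pmfOf_congr fun ω => by grind
  rw [hsum, Finset.mul_sum]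
  refine Finset.sum_congr rfl fun w _ => ?_
  rw [hY, hXZW, hW]
  ring

lemma weak_union (h : CondIndepRV μ X Y fun _ => ()) (hμ : ∀ ω, 0 ≤ μ ω) (f : β → γ) :
    CondIndepRV μ X Y fun ω => f (Y ω) := by
  rw [condIndepRV_iff_eq_div hμ] at h
  refine condIndepRV_of_eq_mul
    (F := fun a _ => pmfOf μ (fun ω => (X ω, ())) (a, ()) / pmfOf μ (fun _ => ()) ())
    (G := fun b c => if f b = c then pmfOf μ (fun ω => (Y ω, ())) (b, ()) else 0) fun a b c => ?_
  split_ifs with hbc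
  · rw [div_mul_eq_mul_div, ← h a b ()]
    exact pmfOf_congr fun ω => by grind
  · rw [mul_zero]
    exact Finset.sum_eq_zero fun ω hω => by grind

lemma noisy_map (h : CondIndepRV μ X Y fun _ => ()) (hμ : ∀ ω, 0 ≤ μ ω) (f : β → γ)
    (φ : γ → α → δ) : CondIndepRV μ (fun ω => φ (f (Y ω)) (X ω)) Y fun ω => f (Y ω) :=
  (h.weak_union hμ f).map_left fun a c => φ c a

end CondIndepRV

end CondIndep

section Gibbs

open InformationTheory Real

lemma mul_klFun_div {p q : ℝ} (h : q = 0 → p = 0) :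
    q * klFun (p / q) = p * log (p / q) + (q - p) := by
  rcases eq_or_ne q 0 with rfl | hq
  · simp [h rfl]
  · rw [klFun]
    field_simp
    ring

variable {ι : Type*} [Fintype ι] {p q : ι → ℝ}

lemma sum_mul_log_div_eq_sum_mul_klFun (hpq : ∀ i, q i = 0 → p i = 0)
    (hsum : ∑ i, p i = ∑ i, q i) :
    ∑ i, p i * log (p i / q i) = ∑ i, q i * klFun (p i / q i) := by
  simp only [mul_klFun_div (hpq _), Finset.sum_add_distrib, Finset.sum_sub_distrib, hsum, sub_self,
    add_zero]

lemma sum_mul_log_div_nonneg (hp : ∀ i, 0 ≤ p i) (hq : ∀ i, 0 ≤ q i)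
    (hpq : ∀ i, q i = 0 → p i = 0) (hsum : ∑ i, p i = ∑ i, q i) :
    0 ≤ ∑ i, p i * log (p i / q i) := by
  rw [sum_mul_log_div_eq_sum_mul_klFun hpq hsum]
  exact Finset.sum_nonneg fun i _ => mul_nonneg (hq i) (klFun_nonneg (div_nonneg (hp i) (hq i)))

lemma sum_mul_log_div_eq_zero_iff (hp : ∀ i, 0 ≤ p i) (hq : ∀ i, 0 ≤ q i)
    (hpq : ∀ i, q i = 0 → p i = 0) (hsum : ∑ i, p i = ∑ i, q i) :
    ∑ i, p i * log (p i / q i) = 0 ↔ ∀ i, p i = q i := by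
  have hpq0 (i : ι) : 0 ≤ p i / q i := div_nonneg (hp i) (hq i)
  rw [sum_mul_log_div_eq_sum_mul_klFun hpq hsum, Finset.sum_eq_zero_iff_of_nonneg
    fun i _ => mul_nonneg (hq i) (klFun_nonneg (hpq0 i))]
  simp only [Finset.mem_univ, forall_true_left]
  refine forall_congr' fun i => ?_
  rw [mul_eq_zero, klFun_eq_zero_iff (hpq0 i)]
  rcases eq_or_ne (q i) 0 with hqi | hqi
  · simp [hqi, hpq i hqi]
  · simp [hqi, div_eq_one_iff_eq hqi]

end Gibbs

section MutualInformation

variable {Ω α β γ : Type} [Fintype Ω] [Fintype α] [DecidableEq α] [Fintype β] [DecidableEq β]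
  [Fintype γ] [DecidableEq γ] {μ : Ω → ℝ} {X : Ω → α} {Y : Ω → β} {Z : Ω → γ}

lemma cmi_eq_sum_mul_log_div (μ : Ω → ℝ) (X : Ω → α) (Y : Ω → β) (Z : Ω → γ) :
    cmi μ X Y Z = ∑ t : α × β × γ, pmfOf μ (fun ω => (X ω, Y ω, Z ω)) t *
      Real.log (pmfOf μ (fun ω => (X ω, Y ω, Z ω)) t /
        (pmfOf μ (fun ω => (X ω, Z ω)) (t.1, t.2.2) * pmfOf μ (fun ω => (Y ω, Z ω)) t.2 /
          pmfOf μ Z t.2.2)) := by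
  simp only [cmi, Fintype.sum_prod_type, div_div_eq_mul_div]

lemma sum_pmfOf_mul_pmfOf_div (hμ : ∀ ω, 0 ≤ μ ω) (X : Ω → α) (Y : Ω → β) (Z : Ω → γ) :
    ∑ t : α × β × γ, pmfOf μ (fun ω => (X ω, Z ω)) (t.1, t.2.2) *
      pmfOf μ (fun ω => (Y ω, Z ω)) t.2 / pmfOf μ Z t.2.2 =
    ∑ t : α × β × γ, pmfOf μ (fun ω => (X ω, Y ω, Z ω)) t := by
  simp only [Fintype.sum_prod_type]
  refine Finset.sum_congr rfl fun a _ => ?_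
  rw [Finset.sum_comm, Finset.sum_comm (s := (univ : Finset β))]
  refine Finset.sum_congr rfl fun c _ => ?_
  rw [sum_pmfOf_middle fun ω => Finset.mem_univ (Y ω), ← Finset.sum_div, ← Finset.mul_sum,
    sum_pmfOf_fst fun ω => Finset.mem_univ (Y ω)]
  exact mul_div_cancel_of_imp fun hc => pmfOf_prodMk_eq_zero hμ hc a

lemma cmi_nonneg (hμ : ∀ ω, 0 ≤ μ ω) (X : Ω → α) (Y : Ω → β) (Z : Ω → γ) :
    0 ≤ cmi μ X Y Z := by
  rw [cmi_eq_sum_mul_log_div]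
  exact sum_mul_log_div_nonneg (fun _ => pmfOf_nonneg hμ _ _)
    (fun _ => div_nonneg (mul_nonneg (pmfOf_nonneg hμ _ _) (pmfOf_nonneg hμ _ _))
      (pmfOf_nonneg hμ _ _))
    (fun _ => pmfOf_eq_zero_of_mul_div_eq_zero hμ) (sum_pmfOf_mul_pmfOf_div hμ X Y Z).symm

lemma cmi_eq_zero_iff (hμ : ∀ ω, 0 ≤ μ ω) : cmi μ X Y Z = 0 ↔ CondIndepRV μ X Y Z := by
  rw [cmi_eq_sum_mul_log_div, condIndepRV_iff_eq_div hμ, sum_mul_log_div_eq_zero_iff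
    (fun _ => pmfOf_nonneg hμ _ _)
    (fun _ => div_nonneg (mul_nonneg (pmfOf_nonneg hμ _ _) (pmfOf_nonneg hμ _ _))
      (pmfOf_nonneg hμ _ _))
    (fun _ => pmfOf_eq_zero_of_mul_div_eq_zero hμ) (sum_pmfOf_mul_pmfOf_div hμ X Y Z).symm]
  simp only [Prod.forall]

lemma mi_comm (μ : Ω → ℝ) (X : Ω → α) (Y : Ω → β) : mi μ X Y = mi μ Y X := by
  rw [mi, mi, Finset.sum_comm]
  refine Finset.sum_congr rfl fun b _ => Finset.sum_congr rfl fun a _ => ?_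
  rw [pmfOf_prodMk_swap, mul_comm (pmfOf μ X a)]

end MutualInformation

section Entropy

variable {Ω α β γ : Type} [Fintype Ω] [DecidableEq α] [DecidableEq β] [DecidableEq γ] {μ : Ω → ℝ}

/-- Shannon entropy of `X`, written as the expectation of `-log P(X)` over the sample space; the
chain rules for `mi` and `cmi` are then identities between integrands. -/
noncomputable def entropyRV (μ : Ω → ℝ) (X : Ω → α) : ℝ :=
  -∑ ω, μ ω * Real.log (pmfOf μ X (X ω))

lemma entropyRV_congr {X : Ω → α} {Y : Ω → β} (h : ∀ ω ω', X ω = X ω' ↔ Y ω = Y ω') :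
    entropyRV μ X = entropyRV μ Y :=
  congrArg Neg.neg <| Finset.sum_congr rfl fun ω _ => by rw [pmfOf_congr fun ω' => h ω' ω]

variable [Fintype α] [Fintype β] [Fintype γ]

lemma mi_eq_entropyRV (hμ : ∀ ω, 0 ≤ μ ω) (X : Ω → α) (Y : Ω → β) :
    mi μ X Y = entropyRV μ X + entropyRV μ Y - entropyRV μ (fun ω => (X ω, Y ω)) := by
  have hmi : mi μ X Y = ∑ ω, μ ω * Real.log (pmfOf μ (fun ω => (X ω, Y ω)) (X ω, Y ω) /
      (pmfOf μ X (X ω) * pmfOf μ Y (Y ω))) := by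
    rw [← sum_pmfOf_mul (fun ω => (X ω, Y ω)) fun t => Real.log
      (pmfOf μ (fun ω => (X ω, Y ω)) t / (pmfOf μ X t.1 * pmfOf μ Y t.2)), Fintype.sum_prod_type]
    rfl
  simp only [hmi, entropyRV, ← Finset.sum_neg_distrib, ← Finset.sum_add_distrib,
    ← Finset.sum_sub_distrib]
  refine Finset.sum_congr rfl fun ω _ => ?_
  rcases eq_or_ne (μ ω) 0 with hω | hω
  · simp [hω]
  · have hX := (pmfOf_apply_pos hμ X hω).ne'
    have hY := (pmfOf_apply_pos hμ Y hω).ne'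
    have hXY := (pmfOf_apply_pos hμ (fun ω => (X ω, Y ω)) hω).ne'
    rw [Real.log_div hXY (mul_ne_zero hX hY), Real.log_mul hX hY]
    ring

lemma cmi_eq_entropyRV (hμ : ∀ ω, 0 ≤ μ ω) (X : Ω → α) (Y : Ω → β) (Z : Ω → γ) :
    cmi μ X Y Z = entropyRV μ (fun ω => (X ω, Z ω)) + entropyRV μ (fun ω => (Y ω, Z ω))
      - entropyRV μ (fun ω => (X ω, Y ω, Z ω)) - entropyRV μ Z := by
  rw [cmi_eq_sum_mul_log_div, sum_pmfOf_mul (fun ω => (X ω, Y ω, Z ω))]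
  simp only [entropyRV, ← Finset.sum_neg_distrib, ← Finset.sum_add_distrib,
    ← Finset.sum_sub_distrib]
  refine Finset.sum_congr rfl fun ω _ => ?_
  rcases eq_or_ne (μ ω) 0 with hω | hω
  · simp [hω]
  · have hZ := (pmfOf_apply_pos hμ Z hω).ne'
    have hXZ := (pmfOf_apply_pos hμ (fun ω => (X ω, Z ω)) hω).ne'
    have hYZ := (pmfOf_apply_pos hμ (fun ω => (Y ω, Z ω)) hω).ne'
    have hXYZ := (pmfOf_apply_pos hμ (fun ω => (X ω, Y ω, Z ω)) hω).ne'
    rw [Real.log_div hXYZ (div_ne_zero (mul_ne_zero hXZ hYZ) hZ),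
      Real.log_div (mul_ne_zero hXZ hYZ) hZ, Real.log_mul hXZ hYZ]
    ring

-- Both sides are `I((X, Z); Y)`.
lemma mi_add_cmi_swap (hμ : ∀ ω, 0 ≤ μ ω) (X : Ω → α) (Y : Ω → β) (Z : Ω → γ) :
    mi μ X Y + cmi μ Z Y X = mi μ Z Y + cmi μ X Y Z := by
  have hXYZ : entropyRV μ (fun ω => (Z ω, Y ω, X ω)) = entropyRV μ (fun ω => (X ω, Y ω, Z ω)) :=
    entropyRV_congr (by grind)
  have hXZ : entropyRV μ (fun ω => (Z ω, X ω)) = entropyRV μ (fun ω => (X ω, Z ω)) :=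
    entropyRV_congr (by grind)
  have hXY : entropyRV μ (fun ω => (Y ω, X ω)) = entropyRV μ (fun ω => (X ω, Y ω)) :=
    entropyRV_congr (by grind)
  have hYZ : entropyRV μ (fun ω => (Y ω, Z ω)) = entropyRV μ (fun ω => (Z ω, Y ω)) :=
    entropyRV_congr (by grind)
  rw [mi_eq_entropyRV hμ, mi_eq_entropyRV hμ, cmi_eq_entropyRV hμ, cmi_eq_entropyRV hμ, hXYZ, hXZ,
    hXY, hYZ]
  ring

variable {X : Ω → α} {Y : Ω → β} {Z : Ω → γ}

lemma CondIndepRV.mi_add_cmi (h : CondIndepRV μ Z Y X) (hμ : ∀ ω, 0 ≤ μ ω) :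
    mi μ Z Y + cmi μ X Y Z = mi μ X Y := by
  rw [← mi_add_cmi_swap hμ, (cmi_eq_zero_iff hμ).2 h, add_zero]

lemma CondIndepRV.mi_le (h : CondIndepRV μ Z Y X) (hμ : ∀ ω, 0 ≤ μ ω) : mi μ Z Y ≤ mi μ X Y :=
  h.mi_add_cmi hμ ▸ le_add_of_nonneg_right (cmi_nonneg hμ X Y Z)

lemma CondIndepRV.mi_eq_iff (h : CondIndepRV μ Z Y X) (hμ : ∀ ω, 0 ≤ μ ω) :
    mi μ Z Y = mi μ X Y ↔ CondIndepRV μ X Y Z := by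
  rw [← h.mi_add_cmi hμ, left_eq_add, cmi_eq_zero_iff hμ]

end Entropy

section MarkovChain

variable {Ω A : Type} [Fintype Ω] [DecidableEq A] {μ : Ω → ℝ} {x : ℕ → Ω → A} {s T : ℕ}

lemma condIndepRV_past_of_le (hμ : ∀ ω, 0 ≤ μ ω)
    (h : ∀ m, s ≤ m → m < T →
      CondIndepRV μ (fun ω => fun i : Fin (m - s) => x (s + i) ω) (x (m + 1)) (x m))
    {k n : ℕ} (hk : s ≤ k) (hkn : k ≤ n) (hn : n ≤ T) :
    CondIndepRV μ (fun ω => fun i : Fin (k - s) => x (s + i) ω) (x n) (x k) := by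
  induction n, hkn using Nat.le_induction with
  | base => exact condIndepRV_self_right _ _
  | succ n hkn ih =>
    rcases hkn.eq_or_lt with rfl | hlt
    · exact h k hk hn
    · refine (ih (by omega)).trans hμ ?_
      have hpast := (h n (by omega) hn).map_left fun (v : Fin (n - s) → A) _ =>
        ((fun i : Fin (k - s) => v ⟨i, by omega⟩), v ⟨k - s, by omega⟩)
      simpa only [Nat.add_sub_cancel' hk] using hpast

lemma condIndepRV_of_lt_of_le (hμ : ∀ ω, 0 ≤ μ ω)
    (h : ∀ m, s ≤ m → m < T →
      CondIndepRV μ (fun ω => fun i : Fin (m - s) => x (s + i) ω) (x (m + 1)) (x m))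
    {m k n : ℕ} (hm : s ≤ m) (hmk : m < k) (hkn : k ≤ n) (hn : n ≤ T) :
    CondIndepRV μ (x m) (x n) (x k) := by
  have hpast := (condIndepRV_past_of_le hμ h (by omega) hkn hn).map_left
    fun (v : Fin (k - s) → A) _ => v ⟨m - s, by omega⟩
  simpa only [Nat.add_sub_cancel' hm] using hpast

end MarkovChain

section Noise

variable {Ω A E E' Z B ι : Type} [Fintype Ω] [DecidableEq A] [DecidableEq E] [DecidableEq E']
  [DecidableEq Z] [DecidableEq B] [Fintype ι] {μ : Ω → ℝ} {W : Ω → E'} {N : ι → Ω → E}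
  {X : ι → Ω → A}

/-- The target noise `W` and the noises `N i` are mutually independent and jointly independent of
the states `X`, which may depend on each other. -/
def IndepNoise (μ : Ω → ℝ) (W : Ω → E') (N : ι → Ω → E) (X : ι → Ω → A) : Prop :=
  ∀ w e v, pmfOf μ (fun ω => (W ω, (fun i => N i ω), fun i => X i ω)) (w, e, v) =
    pmfOf μ W w * (∏ i, pmfOf μ (N i) (e i)) * pmfOf μ (fun ω i => X i ω) v

namespace IndepNoise

lemma condIndepRV_target (h : IndepNoise μ W N X) :
    CondIndepRV μ W (fun ω => ((fun i => N i ω), fun i => X i ω)) fun _ => () := by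
  refine condIndepRV_const_of_eq_mul (F := pmfOf μ W)
    (G := fun t => (∏ i, pmfOf μ (N i) (t.1 i)) * pmfOf μ (fun ω i => X i ω) t.2) ?_
  rintro w ⟨e, v⟩
  rw [← mul_assoc, ← h]

lemma condIndepRV_noise [DecidableEq ι] (h : IndepNoise μ W N X) (i : ι) :
    CondIndepRV μ (N i) (fun ω => (W ω, (fun j : {j // j ≠ i} => N j ω), fun j => X j ω))
      fun _ => () := by
  refine condIndepRV_const_of_eq_mul (F := pmfOf μ (N i))
    (G := fun t => pmfOf μ W t.1 * (∏ j : {j // j ≠ i}, pmfOf μ (N j) (t.2.1 j)) *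
      pmfOf μ (fun ω j => X j ω) t.2.2) ?_
  rintro a ⟨w, e, v⟩
  have hprod : ∏ j, pmfOf μ (N j) ((Equiv.funSplitAt i E).symm (a, e) j) =
      pmfOf μ (N i) a * ∏ j : {j // j ≠ i}, pmfOf μ (N j) (e j) := by
    rw [Fintype.prod_eq_mul_prod_subtype_ne _ i]
    congr 1
    · simp
    · exact Finset.prod_congr rfl fun j _ => by simp [j.2]
  have hjoint := h w ((Equiv.funSplitAt i E).symm (a, e)) v
  rw [hprod] at hjoint
  refine (pmfOf_congr fun ω => ?_).trans (hjoint.trans (by ring))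
  simp only [Prod.mk.injEq, Equiv.eq_symm_apply, Equiv.funSplitAt_apply]
  tauto

lemma condIndepRV_representation [DecidableEq ι] (h : IndepNoise μ W N X) (hμ : ∀ ω, 0 ≤ μ ω)
    (g : A → E → Z) (i : ι) :
    CondIndepRV μ (fun ω => g (X i ω) (N i ω))
      (fun ω => (W ω, (fun j : {j // j ≠ i} => N j ω), fun j => X j ω)) (X i) :=
  (h.condIndepRV_noise i).noisy_map hμ (fun t => t.2.2 i) g

lemma condIndepRV_representation_target (h : IndepNoise μ W N X) (hμ : ∀ ω, 0 ≤ μ ω)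
    (g : A → E → Z) (f : A → E' → B) {i j k : ι} (hX : CondIndepRV μ (X i) (X k) (X j)) :
    CondIndepRV μ (fun ω => (X i ω, g (X i ω) (N i ω))) (fun ω => f (X k ω) (W ω)) (X j) := by
  classical
  have hstate : CondIndepRV μ (fun ω => (X i ω, g (X i ω) (N i ω))) (X k) (X j) := by
    refine (hX.symm.trans hμ ?_).symm
    exact ((h.condIndepRV_representation hμ (fun a e => (a, g a e)) i).map_right
      fun t _ => (t.2.2 k, t.2.2 j)).symm
  refine hstate.trans hμ ?_
  exact ((h.condIndepRV_target.noisy_map hμ (fun t => t.2 k) f).map_right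
    fun t _ => ((t.2 i, g (t.2 i) (t.1 i)), t.2 j)).symm

variable [Fintype A] [Fintype Z]

lemma mi_representation_le (h : IndepNoise μ W N X) (hμ : ∀ ω, 0 ≤ μ ω) (g : A → E → Z)
    (i j : ι) : mi μ (fun ω => g (X i ω) (N i ω)) (X j) ≤ mi μ (X i) (X j) := by
  classical
  exact ((h.condIndepRV_representation hμ g i).map_right fun t _ => t.2.2 j).mi_le hμ

lemma mi_representation_representation_le (h : IndepNoise μ W N X) (hμ : ∀ ω, 0 ≤ μ ω)
    (g : A → E → Z) {i j : ι} (hij : i ≠ j) :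
    mi μ (fun ω => g (X i ω) (N i ω)) (fun ω => g (X j ω) (N j ω)) ≤
      mi μ (fun ω => g (X i ω) (N i ω)) (X j) := by
  classical
  rw [mi_comm μ _ fun ω => g (X j ω) (N j ω), mi_comm μ _ (X j)]
  exact ((h.condIndepRV_representation hμ g j).map_right
    fun t _ => g (t.2.2 i) (t.2.1 ⟨i, hij⟩)).mi_le hμ

lemma condIndepRV_of_mi_eq (h : IndepNoise μ W N X) (hμ : ∀ ω, 0 ≤ μ ω) (g : A → E → Z) {i j : ι}
    (hij : i ≠ j) (heq : mi μ (fun ω => g (X i ω) (N i ω)) (fun ω => g (X j ω) (N j ω)) =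
      mi μ (X i) (X j)) :
    CondIndepRV μ (X i) (X j) fun ω => g (X i ω) (N i ω) := by
  classical
  refine (((h.condIndepRV_representation hμ g i).map_right fun t _ => t.2.2 j).mi_eq_iff hμ).1 ?_
  exact (h.mi_representation_le hμ g i j).antisymm
    (heq ▸ h.mi_representation_representation_le hμ g hij)

lemma mi_target_eq [Fintype B] (h : IndepNoise μ W N X) (hμ : ∀ ω, 0 ≤ μ ω) (g : A → E → Z)
    (f : A → E' → B) {i j k : ι} (hX : CondIndepRV μ (X i) (X k) (X j))
    (hZ : CondIndepRV μ (X i) (X j) fun ω => g (X i ω) (N i ω)) :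
    mi μ (fun ω => g (X i ω) (N i ω)) (fun ω => f (X k ω) (W ω)) =
      mi μ (X i) fun ω => f (X k ω) (W ω) := by
  classical
  have hchain : CondIndepRV μ (fun ω => g (X i ω) (N i ω)) (fun ω => f (X k ω) (W ω)) (X i) :=
    (h.condIndepRV_representation hμ g i).map_right fun t _ => f (t.2.2 k) t.1
  exact (hchain.mi_eq_iff hμ).2 (hZ.trans hμ (h.condIndepRV_representation_target hμ g f hX))

end IndepNoise

end Noise

theorem sufficiency_at_larger_lags_general {Ω A E E' Z B : Type} [Fintype Ω]
    [Fintype A] [DecidableEq A] [DecidableEq E] [DecidableEq E']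
    [Fintype Z] [DecidableEq Z] [Fintype B] [DecidableEq B]
    (μ : Ω → ℝ) (hμ : IsPMF μ)
    (x : ℕ → Ω → A) (ε : ℕ → Ω → E) (εy : Ω → E') (g : A → E → Z)
    (s T τ τ' : ℕ) (hτ : 0 < τ) (hττ' : τ ≤ τ')
    (hMarkov : ∀ m, s ≤ m → m < T →
      cmi μ (fun ω => fun i : Fin (m - s) => x (s + (i : ℕ)) ω) (x (m + 1)) (x m) = 0)
    (hNoise : ∀ (ey : E') (e : Fin (T - s + 1) → E) (v : Fin (T - s + 1) → A),
      pmfOf μ (fun ω => (εy ω, (fun i : Fin (T - s + 1) => ε (s + (i : ℕ)) ω),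
          (fun i : Fin (T - s + 1) => x (s + (i : ℕ)) ω))) (ey, e, v)
        = pmfOf μ εy ey * (∏ i : Fin (T - s + 1), pmfOf μ (ε (s + (i : ℕ))) (e i))
          * pmfOf μ (fun ω => fun i : Fin (T - s + 1) => x (s + (i : ℕ)) ω) v)
    (hAIG : ((T - s - τ + 1 : ℕ) : ℝ)⁻¹ *
      ∑ m ∈ Finset.Icc s (T - τ),
        (mi μ (x m) (x (m + τ))
          - mi μ (fun ω => g (x m ω) (ε m ω)) (fun ω => g (x (m + τ) ω) (ε (m + τ) ω))) = 0) :
    ∀ t, s ≤ t → t + τ' ≤ T → ∀ f : A → E' → B,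
      mi μ (fun ω => g (x t ω) (ε t ω)) (fun ω => f (x (t + τ') ω) (εy ω))
        = mi μ (x t) (fun ω => f (x (t + τ') ω) (εy ω)) := by
  have hnoise : IndepNoise μ εy (fun i : Fin (T - s + 1) => ε (s + i)) fun i => x (s + i) := hNoise
  intro t hst htT f
  have hle : ∀ m ∈ Finset.Icc s (T - τ), 0 ≤ mi μ (x m) (x (m + τ)) -
      mi μ (fun ω => g (x m ω) (ε m ω)) (fun ω => g (x (m + τ) ω) (ε (m + τ) ω)) := by
    intro m hm
    rw [Finset.mem_Icc] at hm
    obtain ⟨i, rfl⟩ := Nat.exists_eq_add_of_le hm.1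
    rw [sub_nonneg, add_assoc]
    exact (hnoise.mi_representation_representation_le hμ.1 g (i := ⟨i, by omega⟩)
      (j := ⟨i + τ, by omega⟩) (by grind)).trans (hnoise.mi_representation_le hμ.1 g _ _)
  have hgap := (Finset.sum_eq_zero_iff_of_nonneg hle).1
    ((mul_eq_zero.1 hAIG).resolve_left (by positivity)) t (Finset.mem_Icc.2 ⟨hst, by omega⟩)
  have hchain : CondIndepRV μ (x t) (x (t + τ')) (x (t + τ)) :=
    condIndepRV_of_lt_of_le hμ.1 (fun m hm hmT => (cmi_eq_zero_iff hμ.1).1 (hMarkov m hm hmT))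
      hst (by omega) (by omega) htT
  obtain ⟨i, rfl⟩ := Nat.exists_eq_add_of_le hst
  rw [add_assoc s i τ] at hgap hchain
  rw [add_assoc s i τ'] at hchain ⊢
  let p : Fin (T - s + 1) := ⟨i, by omega⟩
  let q : Fin (T - s + 1) := ⟨i + τ, by omega⟩
  let r : Fin (T - s + 1) := ⟨i + τ', by omega⟩
  have hsuff := hnoise.condIndepRV_of_mi_eq hμ.1 g (i := p) (j := q) (by grind)
    (sub_eq_zero.1 hgap).symm
  exact hnoise.mi_target_eq hμ.1 g f (i := p) (j := q) (k := r) hchain hsuff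

/-- **Preservation at lag `τ` gives sufficiency at all larger lags**: if a sequence of
representations `z_t = g(x_t, ε_t)` of a homogeneous Markov chain preserves
autoinformation at lag `τ` (average autoinformation gap zero), then for any `τ' ≥ τ` and
every noisy function `y_{t+τ'} = f(x_{t+τ'}, εy)` of the future state the predictive
information agrees: `I(z_t; y_{t+τ'}) = I(x_t; y_{t+τ'})`. -/
theorem sufficiency_at_larger_lags {Ω A E E' Z B : Type} [Fintype Ω]
    [Fintype A] [DecidableEq A] [Fintype E] [DecidableEq E] [Fintype E'] [DecidableEq E']
    [Fintype Z] [DecidableEq Z] [Fintype B] [DecidableEq B]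
    (μ : Ω → ℝ) (hμ : IsPMF μ)
    (x : ℕ → Ω → A) (ε : ℕ → Ω → E) (εy : Ω → E') (g : A → E → Z)
    (s T τ τ' : ℕ) (hτ : 0 < τ) (hττ' : τ ≤ τ') (hsT : s + τ' ≤ T)
    -- `[x_t]_{t=s}^T` is a Markov chain
    (hMarkov : ∀ m, s ≤ m → m < T →
      cmi μ (fun ω => fun i : Fin (m - s) => x (s + (i : ℕ)) ω) (x (m + 1)) (x m) = 0)
    -- homogeneity of the chain
    (hHomog : ∀ m m', s ≤ m → m < T → s ≤ m' → m' < T → ∀ a b : A,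
      pmfOf μ (fun ω => (x m ω, x (m + 1) ω)) (a, b) * pmfOf μ (x m') a
        = pmfOf μ (fun ω => (x m' ω, x (m' + 1) ω)) (a, b) * pmfOf μ (x m) a)
    -- the noise variables (including the target noise) are mutually independent and
    -- independent of the chain
    (hNoise : ∀ (ey : E') (e : Fin (T - s + 1) → E) (v : Fin (T - s + 1) → A),
      pmfOf μ (fun ω => (εy ω, (fun i : Fin (T - s + 1) => ε (s + (i : ℕ)) ω),
          (fun i : Fin (T - s + 1) => x (s + (i : ℕ)) ω))) (ey, e, v)
        = pmfOf μ εy ey * (∏ i : Fin (T - s + 1), pmfOf μ (ε (s + (i : ℕ))) (e i))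
          * pmfOf μ (fun ω => fun i : Fin (T - s + 1) => x (s + (i : ℕ)) ω) v)
    -- the sequence preserves autoinformation at lag `τ`
    (hAIG : ((T - s - τ + 1 : ℕ) : ℝ)⁻¹ *
      ∑ m ∈ Finset.Icc s (T - τ),
        (mi μ (x m) (x (m + τ))
          - mi μ (fun ω => g (x m ω) (ε m ω)) (fun ω => g (x (m + τ) ω) (ε (m + τ) ω))) = 0) :
    ∀ t, s ≤ t → t + τ' ≤ T → ∀ f : A → E' → B,
      mi μ (fun ω => g (x t ω) (ε t ω)) (fun ω => f (x (t + τ') ω) (εy ω))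
        = mi μ (x t) (fun ω => f (x (t + τ') ω) (εy ω)) := by
  exact sufficiency_at_larger_lags_general μ hμ x ε εy g s T τ τ' hτ hττ' hMarkov hNoise hAIG
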